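/- arXiv:1603.06385 — 6 statements merged into one kernel-verified Lean document; each statement's English description precedes it below -/
import Mathlib

section
/- Let W be a kernel and g ∈ L∞([0,1]). For each n ∈ ℕ let W_n and g_n be the block averages of W and g, let u be the solution of the continuum voting model IVP for (W, g) and u_n the solution for (W_n, g_n). Then for every T > 0, sup_{t∈[0,T]} ‖u(·,t) − u_n(·,t)‖_{L²([0,1])} → 0 as n → ∞. -/
open MeasureTheory Filter Set

noncomputable section

/-- Lebesgue measure restricted to `[0,1]`. -/
def mu01 : Measure ℝ := volume.restrict (Set.Icc (0:ℝ) 1)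

/-- A kernel: a symmetric measurable function `[0,1]² → [-1,1]`. -/
def IsKernel (W : ℝ → ℝ → ℝ) : Prop :=
  Measurable (Function.uncurry W) ∧ (∀ x y, W x y = W y x) ∧
    ∀ x y, W x y ∈ Set.Icc (-1:ℝ) 1

/-- A graphon: a symmetric measurable function `[0,1]² → [0,1]`. -/
def IsGraphon (W : ℝ → ℝ → ℝ) : Prop :=
  Measurable (Function.uncurry W) ∧ (∀ x y, W x y = W y x) ∧
    ∀ x y, W x y ∈ Set.Icc (0:ℝ) 1

/-- `g ∈ L∞([0,1])`: measurable and essentially bounded on `[0,1]`. -/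
def IsLinf (g : ℝ → ℝ) : Prop :=
  Measurable g ∧ ∃ M : ℝ, ∀ᵐ x ∂mu01, |g x| ≤ M

/-- A solution of the continuum voting model IVP for `(W, g)`: a jointly measurable
function, essentially bounded on `[0,1] × [0,T]` for every `T > 0`, satisfying the
integral form of the IVP for every `t ≥ 0` and almost every `x ∈ [0,1]`. -/
def IsSolution (W : ℝ → ℝ → ℝ) (g : ℝ → ℝ) (u : ℝ → ℝ → ℝ) : Prop :=
  Measurable (Function.uncurry u) ∧
  (∀ T > (0:ℝ), ∃ M : ℝ, ∀ t ∈ Set.Icc (0:ℝ) T, ∀ᵐ x ∂mu01, |u x t| ≤ M) ∧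
  (∀ t ≥ (0:ℝ), ∀ᵐ x ∂mu01,
    u x t = g x + ∫ s in Set.Icc (0:ℝ) t, ∫ y in Set.Icc (0:ℝ) 1, W x y * (u y s - u x s))

/-- A bounded solution: essentially uniformly bounded over all times `t ≥ 0`. -/
def BoundedSolution (u : ℝ → ℝ → ℝ) : Prop :=
  ∃ M : ℝ, ∀ t ≥ (0:ℝ), ∀ᵐ x ∂mu01, |u x t| ≤ M

/-- `u` reaches consensus on `A`:
`lim_{t→∞} ess sup_{(x,y) ∈ A×A} |u(x,t) − u(y,t)| = 0`. -/
def ReachesConsensusOn (u : ℝ → ℝ → ℝ) (A : Set ℝ) : Prop :=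
  ∀ ε > (0:ℝ), ∃ T : ℝ, ∀ t ≥ T,
    ∀ᵐ p : ℝ × ℝ ∂((volume.restrict A).prod (volume.restrict A)),
      |u p.1 t - u p.2 t| ≤ ε

open Classical in
/-- `u*(x) = lim_{t→∞} u(x,t)` where the limit exists, and `0` otherwise. -/
def uStar (u : ℝ → ℝ → ℝ) (x : ℝ) : ℝ :=
  if h : ∃ L : ℝ, Filter.Tendsto (fun t => u x t) Filter.atTop (nhds L)
  then h.choose else 0

/-- The normalised degree function of a kernel. -/
def degW (W : ℝ → ℝ → ℝ) (x : ℝ) : ℝ := ∫ y in Set.Icc (0:ℝ) 1, W x y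

/-- The block `I_iⁿ = ((i−1)/n, i/n]` containing `x`, i.e. with `i = ⌈n x⌉`. -/
def blockIoc (n : ℕ) (x : ℝ) : Set ℝ :=
  Set.Ioc (((⌈(n : ℝ) * x⌉ : ℤ) : ℝ) / n - 1 / n) (((⌈(n : ℝ) * x⌉ : ℤ) : ℝ) / n)

/-- The block average of `g`: `g_n(x) = n ∫_{I_iⁿ} g` for `x ∈ I_iⁿ`. -/
def blockAvgG (n : ℕ) (g : ℝ → ℝ) (x : ℝ) : ℝ :=
  (n : ℝ) * ∫ y in blockIoc n x, g y

/-- The block average of `W`: `W_n(x,y) = n² ∫_{I_iⁿ × I_jⁿ} W` for `(x,y) ∈ I_iⁿ × I_jⁿ`. -/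
def blockAvgW (n : ℕ) (W : ℝ → ℝ → ℝ) (x y : ℝ) : ℝ :=
  (n : ℝ) ^ 2 * ∫ p in (blockIoc n x) ×ˢ (blockIoc n y), W p.1 p.2

/-- The `L²([0,1])` norm. -/
def L2normI (f : ℝ → ℝ) : ℝ := Real.sqrt (∫ x in Set.Icc (0:ℝ) 1, (f x) ^ 2)

/-- The `L²([0,1]²)` norm. -/
def L2normSq (F : ℝ → ℝ → ℝ) : ℝ :=
  Real.sqrt (∫ p in (Set.Icc (0:ℝ) 1) ×ˢ (Set.Icc (0:ℝ) 1), (F p.1 p.2) ^ 2)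

/-- `A` is a twin-set of `W`. -/
def IsTwinSet (W : ℝ → ℝ → ℝ) (A : Set ℝ) : Prop :=
  MeasurableSet A ∧ A ⊆ Set.Icc (0:ℝ) 1 ∧ 0 < volume A ∧
  ∃ a : ℝ → ℝ → ℝ, ∀ x ∈ A, ∀ x' ∈ A,
    ∀ᵐ y ∂mu01, W x y = a x x' * W x' y

/-- `A` is a maximal twin-set of `W`. -/
def IsMaximalTwinSet (W : ℝ → ℝ → ℝ) (A : Set ℝ) : Prop :=
  IsTwinSet W A ∧ ∀ B : Set ℝ, IsTwinSet W B → A ⊆ B → volume (symmDiff B A) = 0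

/-- A kernel is connected if every measurable `S ⊆ [0,1]` with `0 < λ(S) < 1` satisfies
`∫_{S × ([0,1]∖S)} |W| > 0`. -/
def ConnectedKernel (W : ℝ → ℝ → ℝ) : Prop :=
  ∀ S : Set ℝ, MeasurableSet S → S ⊆ Set.Icc (0:ℝ) 1 →
    0 < volume S → volume S < 1 →
    0 < ∫ p in S ×ˢ (Set.Icc (0:ℝ) 1 \ S), |W p.1 p.2|

/-- A twin-graphon: a graphon with finitely many maximal twin-sets covering `[0,1]`
up to a null set. -/
def IsTwinGraphon (W : ℝ → ℝ → ℝ) : Prop :=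
  IsGraphon W ∧ ∃ (n : ℕ) (A : Fin n → Set ℝ),
    (∀ i, IsMaximalTwinSet W (A i)) ∧
    volume (symmDiff (Set.Icc (0:ℝ) 1) (⋃ i, A i)) = 0


instance : IsProbabilityMeasure mu01 := ⟨by simp [mu01]⟩

theorem bint {α : Type*} [MeasurableSpace α] {ν : Measure α} [IsFiniteMeasure ν] {f : α → ℝ}
    (hf : Measurable f) (C : ℝ) (hC : ∀ x, |f x| ≤ C) : Integrable f ν :=
  Integrable.of_bound hf.aestronglyMeasurable C (Eventually.of_forall hC)

theorem integral_add3 {α : Type*} [MeasurableSpace α] {ν : Measure α} {f g h : α → ℝ}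
    (hf : Integrable f ν) (hg : Integrable g ν) (hh : Integrable h ν) :
    ∫ x, (f x + g x + h x) ∂ν = (∫ x, f x ∂ν) + (∫ x, g x ∂ν) + ∫ x, h x ∂ν := by
  have := integral_add (hf.add hg) hh
  rw [← integral_add hf hg]
  exact this

theorem cs_ineq {α : Type*} [MeasurableSpace α] {ν : Measure α} [IsFiniteMeasure ν] {f : α → ℝ}
    (hf : Measurable f) (C : ℝ) (hC : ∀ x, |f x| ≤ C) :
    (∫ x, f x ∂ν) ^ 2 ≤ ν.real univ * ∫ x, f x ^ 2 ∂ν := by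
  have i1 : Integrable f ν := bint hf C hC
  have i2 : Integrable (fun x => f x ^ 2) ν := by
    refine bint (by fun_prop) (C ^ 2) fun x => ?_
    rw [abs_pow]
    exact pow_le_pow_left₀ (abs_nonneg _) (hC x) 2
  set m := ν.real univ with hm
  set I := ∫ x, f x ∂ν with hI
  have hm0 : 0 ≤ m := measureReal_nonneg
  have key : ∫ x, (m * f x - I) ^ 2 ∂ν = m * (m * (∫ x, f x ^ 2 ∂ν) - I ^ 2) := by
    have : ∀ x, (m * f x - I) ^ 2 = m ^ 2 * f x ^ 2 + (-(2 * m * I)) * f x + I ^ 2 := by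
      intro x; ring
    simp_rw [this]
    rw [integral_add3 (i2.const_mul _) (i1.const_mul _) (integrable_const _),
      integral_const_mul, integral_const_mul,
      integral_const, ← hI, ← hm, smul_eq_mul]
    ring
  have h0 : 0 ≤ ∫ x, (m * f x - I) ^ 2 ∂ν := integral_nonneg fun x => sq_nonneg _
  rw [key] at h0
  rcases hm0.eq_or_lt with h | h
  · have : ν = 0 := by
      have h' : ν univ = 0 := by
        have := h.symm
        rw [hm, measureReal_eq_zero_iff] at this
        exact this
      exact Measure.measure_univ_eq_zero.1 h'
    have : I = 0 := by rw [hI, this]; simp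
    rw [this, ← h]; simp
  · have := nonneg_of_mul_nonneg_right h0 h
    linarith

/-- the right-hand side difference -/
def Rdiff (W V u v : ℝ → ℝ → ℝ) (x s : ℝ) : ℝ :=
  ∫ y, (W x y * (u y s - u x s) - V x y * (v y s - v x s)) ∂mu01

theorem abs_rhs_le {w a b C : ℝ} (hw : |w| ≤ 1) (ha : |a| ≤ C) (hb : |b| ≤ C) :
    |w * (a - b)| ≤ 2 * C := by
  rw [abs_mul]
  have : |a - b| ≤ 2 * C := by
    have := abs_sub a b
    linarith
  nlinarith [abs_nonneg w, abs_nonneg (a - b)]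

section energy
variable {W V u v : ℝ → ℝ → ℝ} {M M' : ℝ}
  (hW : Measurable (Function.uncurry W)) (hV : Measurable (Function.uncurry V))
  (hu : Measurable (Function.uncurry u)) (hv : Measurable (Function.uncurry v))
  (hW1 : ∀ x y, |W x y| ≤ 1) (hV1 : ∀ x y, |V x y| ≤ 1)
  (huM : ∀ x y, |u x y| ≤ M) (hvM : ∀ x y, |v x y| ≤ M')

include hW hu in
theorem meas_rhs3 : Measurable (fun p : (ℝ × ℝ) × ℝ => W p.1.1 p.2 * (u p.2 p.1.2 - u p.1.1 p.1.2)) := by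
  have a : Measurable (fun p : (ℝ × ℝ) × ℝ => W p.1.1 p.2) :=
    hW.comp (by fun_prop : Measurable (fun p : (ℝ × ℝ) × ℝ => (p.1.1, p.2)))
  have b : Measurable (fun p : (ℝ × ℝ) × ℝ => u p.2 p.1.2) :=
    hu.comp (by fun_prop : Measurable (fun p : (ℝ × ℝ) × ℝ => (p.2, p.1.2)))
  have c : Measurable (fun p : (ℝ × ℝ) × ℝ => u p.1.1 p.1.2) :=
    hu.comp (by fun_prop : Measurable (fun p : (ℝ × ℝ) × ℝ => (p.1.1, p.1.2)))
  fun_prop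

include hW hu hW1 huM in
theorem int_rhs_y (x s : ℝ) : Integrable (fun y => W x y * (u y s - u x s)) mu01 := by
  refine bint ?_ (2 * M) fun y => abs_rhs_le (hW1 _ _) (huM _ _) (huM _ _)
  exact (meas_rhs3 hW hu).comp (by fun_prop : Measurable (fun y : ℝ => ((x, s), y)))

include hW hu in
theorem meas_rhs2 : Measurable (fun p : ℝ × ℝ => ∫ y, W p.1 y * (u y p.2 - u p.1 p.2) ∂mu01) :=
  ((meas_rhs3 hW hu).stronglyMeasurable.integral_prod_right' (ν := mu01)).measurable

theorem abs_int_mu_le {f : ℝ → ℝ} {C : ℝ} (h : ∀ y, |f y| ≤ C) : |∫ y, f y ∂mu01| ≤ C := by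
  have := norm_integral_le_of_norm_le_const (μ := mu01) (f := f) (C := C) (Eventually.of_forall h)
  simpa using this

include hW hu hW1 huM in
theorem int_rhs_s (x t : ℝ) :
    Integrable (fun s => ∫ y, W x y * (u y s - u x s) ∂mu01) (volume.restrict (Icc (0:ℝ) t)) := by
  refine bint ?_ (2 * M) fun s => abs_int_mu_le fun y => abs_rhs_le (hW1 _ _) (huM _ _) (huM _ _)
  exact (meas_rhs2 hW hu).comp (by fun_prop : Measurable (fun s : ℝ => (x, s)))

include hW hu hW1 huM hV hv hV1 hvM in
theorem Rdiff_eq (x s : ℝ) : Rdiff W V u v x s =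
    (∫ y, W x y * (u y s - u x s) ∂mu01) - ∫ y, V x y * (v y s - v x s) ∂mu01 :=
  integral_sub (int_rhs_y hW hu hW1 huM x s) (int_rhs_y hV hv hV1 hvM x s)

include hW hu hW1 huM hV hv hV1 hvM in
theorem Rdiff_meas : Measurable (fun p : ℝ × ℝ => Rdiff W V u v p.1 p.2) := by
  simp_rw [Rdiff_eq hW hV hu hv hW1 hV1 huM hvM]
  exact (meas_rhs2 hW hu).sub (meas_rhs2 hV hv)

include hW1 huM hV1 hvM in
theorem Rdiff_bd (x s : ℝ) : |Rdiff W V u v x s| ≤ 2 * M + 2 * M' := by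
  refine abs_int_mu_le fun y => (abs_sub _ _).trans ?_
  exact add_le_add (abs_rhs_le (hW1 _ _) (huM _ _) (huM _ _))
    (abs_rhs_le (hV1 _ _) (hvM _ _) (hvM _ _))

theorem sq_bd {a C : ℝ} (h : |a| ≤ C) : |a ^ 2| ≤ C ^ 2 := by
  rw [abs_pow]
  exact pow_le_pow_left₀ (abs_nonneg _) h 2

theorem alg1 {w v1 a b c d M : ℝ} (hv1 : |v1| ≤ 1) (ha : |a| ≤ M) (hb : |b| ≤ M) :
    (w * (a - b) - v1 * (c - d)) ^ 2 ≤
      8 * M ^ 2 * (w - v1) ^ 2 + 4 * (a - c) ^ 2 + 4 * (b - d) ^ 2 := by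
  have e : w * (a - b) - v1 * (c - d) = (w - v1) * (a - b) + v1 * ((a - c) - (b - d)) := by ring
  have h1 : (a - b) ^ 2 ≤ 4 * M ^ 2 := by
    have := abs_le.1 ha
    have := abs_le.1 hb
    nlinarith
  have h2 : v1 ^ 2 ≤ 1 := by
    have := sq_bd hv1
    rwa [abs_of_nonneg (sq_nonneg _), one_pow] at this
  rw [e]
  have h3 : ((w - v1) * (a - b)) ^ 2 ≤ (w - v1) ^ 2 * (4 * M ^ 2) := by
    rw [mul_pow]; exact mul_le_mul_of_nonneg_left h1 (sq_nonneg _)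
  have h4 : (v1 * ((a - c) - (b - d))) ^ 2 ≤ ((a - c) - (b - d)) ^ 2 := by
    rw [mul_pow]; nlinarith [sq_nonneg ((a - c) - (b - d))]
  nlinarith [sq_nonneg ((w - v1) * (a - b) - v1 * ((a - c) - (b - d))),
    sq_nonneg ((a - c) + (b - d))]

/-- squared distance at time s -/
def phi (u v : ℝ → ℝ → ℝ) (s : ℝ) : ℝ := ∫ x, (u x s - v x s) ^ 2 ∂mu01

include hu hv in
theorem meas_D : Measurable (fun p : ℝ × ℝ => (u p.1 p.2 - v p.1 p.2) ^ 2) := by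
  have a : Measurable (fun p : ℝ × ℝ => u p.1 p.2) := hu
  have b : Measurable (fun p : ℝ × ℝ => v p.1 p.2) := hv
  fun_prop

theorem bd_D (huM : ∀ x y, |u x y| ≤ M) (hvM : ∀ x y, |v x y| ≤ M') (x s : ℝ) :
    |(u x s - v x s) ^ 2| ≤ (M + M') ^ 2 :=
  sq_bd ((abs_sub _ _).trans (add_le_add (huM _ _) (hvM _ _)))

include hu hv in
theorem phi_meas : Measurable (phi u v) :=
  (((meas_D hu hv).comp measurable_swap).stronglyMeasurable.integral_prod_right'
    (ν := mu01)).measurable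

include huM hvM in
theorem phi_bd (s : ℝ) : |phi u v s| ≤ (M + M') ^ 2 := abs_int_mu_le fun x => bd_D huM hvM x s

theorem phi_nonneg (s : ℝ) : 0 ≤ phi u v s := integral_nonneg fun x => sq_nonneg _

include hu hv huM hvM in
theorem int_D (s : ℝ) : Integrable (fun x => (u x s - v x s) ^ 2) mu01 :=
  bint ((meas_D hu hv).comp (by fun_prop : Measurable (fun x : ℝ => (x, s)))) _
    (fun x => bd_D huM hvM x s)

include hW hV hW1 hV1 in
theorem int_WV (x : ℝ) : Integrable (fun y => (W x y - V x y) ^ 2) mu01 :=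
  int_D (u := fun y x => W x y) (v := fun y x => V x y) (M := 1) (M' := 1)
    (hW.comp measurable_swap) (hV.comp measurable_swap) (fun _ _ => hW1 _ _) (fun _ _ => hV1 _ _) x

include hW hV hu hv hW1 hV1 huM hvM in
theorem Rdiff_sq (x s : ℝ) : Rdiff W V u v x s ^ 2 ≤
    8 * M ^ 2 * (∫ y, (W x y - V x y) ^ 2 ∂mu01) + 4 * phi u v s + 4 * (u x s - v x s) ^ 2 := by
  have hm : Measurable (fun y => W x y * (u y s - u x s) - V x y * (v y s - v x s)) :=
    ((meas_rhs3 hW hu).comp (by fun_prop : Measurable (fun y : ℝ => ((x, s), y)))).sub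
     ((meas_rhs3 hV hv).comp (by fun_prop : Measurable (fun y : ℝ => ((x, s), y))))
  have hb : ∀ y, |W x y * (u y s - u x s) - V x y * (v y s - v x s)| ≤ 2 * M + 2 * M' := fun y =>
    (abs_sub _ _).trans (add_le_add (abs_rhs_le (hW1 _ _) (huM _ _) (huM _ _))
      (abs_rhs_le (hV1 _ _) (hvM _ _) (hvM _ _)))
  have h := cs_ineq (ν := mu01) hm _ hb
  rw [probReal_univ, one_mul] at h
  refine h.trans ?_
  have i1 := (int_WV hW hV hW1 hV1 x).const_mul (8 * M ^ 2)
  have i2 := (int_D hu hv huM hvM s).const_mul 4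
  calc _ ≤ ∫ y, (8 * M ^ 2 * (W x y - V x y) ^ 2 + 4 * (u y s - v y s) ^ 2
            + 4 * (u x s - v x s) ^ 2) ∂mu01 := by
        refine integral_mono (bint (by fun_prop) _ fun y => sq_bd (hb y))
          ((i1.add i2).add (integrable_const _)) fun y => alg1 (hV1 _ _) (huM _ _) (huM _ _)
    _ = _ := by
        rw [integral_add3 i1 i2 (integrable_const _),
          integral_const_mul, integral_const_mul, integral_const, probReal_univ, one_smul]
        rfl

include hW hV hu hv hW1 hV1 huM hvM in
theorem int_Rsq_x (s : ℝ) : ∫ x, Rdiff W V u v x s ^ 2 ∂mu01 ≤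
    8 * M ^ 2 * (∫ x, ∫ y, (W x y - V x y) ^ 2 ∂mu01 ∂mu01) + 8 * phi u v s := by
  have i0 : Integrable (fun x => ∫ y, (W x y - V x y) ^ 2 ∂mu01) mu01 :=
    bint (((meas_D hW hV).stronglyMeasurable.integral_prod_right' (ν := mu01)).measurable) _
      fun x => abs_int_mu_le fun y => bd_D hW1 hV1 x y
  have i1 := i0.const_mul (8 * M ^ 2)
  have i2 := (int_D hu hv huM hvM s).const_mul 4
  have mR : Measurable (fun x => Rdiff W V u v x s) :=
    (Rdiff_meas hW hV hu hv hW1 hV1 huM hvM).comp (by fun_prop : Measurable (fun x : ℝ => (x, s)))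
  calc _ ≤ ∫ x, (8 * M ^ 2 * (∫ y, (W x y - V x y) ^ 2 ∂mu01) + 4 * phi u v s
            + 4 * (u x s - v x s) ^ 2) ∂mu01 := by
        refine integral_mono (bint (by fun_prop) _
          fun x => sq_bd (Rdiff_bd hW1 hV1 huM hvM x s))
          ((i1.add (integrable_const _)).add i2)
          fun x => Rdiff_sq hW hV hu hv hW1 hV1 huM hvM x s
    _ = _ := by
        rw [integral_add3 i1 (integrable_const _) i2,
          integral_const_mul, integral_const_mul, integral_const, probReal_univ, one_smul]
        have : ∫ x, (u x s - v x s) ^ 2 ∂mu01 = phi u v s := rfl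
        rw [integral_const_mul, this]; ring

include hW hV hu hv hW1 hV1 huM hvM in
theorem energy_ineq {g h : ℝ → ℝ} {T t : ℝ} (ht0 : 0 ≤ t) (htT : t ≤ T)
    (hgi : Integrable (fun x => (g x - h x) ^ 2) mu01)
    (eu : ∀ᵐ x ∂mu01, u x t = g x +
      ∫ s in Icc (0:ℝ) t, ∫ y, W x y * (u y s - u x s) ∂mu01)
    (ev : ∀ᵐ x ∂mu01, v x t = h x +
      ∫ s in Icc (0:ℝ) t, ∫ y, V x y * (v y s - v x s) ∂mu01) :
    phi u v t ≤ 2 * (∫ x, (g x - h x) ^ 2 ∂mu01) +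
      16 * T ^ 2 * M ^ 2 * (∫ x, ∫ y, (W x y - V x y) ^ 2 ∂mu01 ∂mu01) +
      16 * T * ∫ s in Icc (0:ℝ) t, phi u v s := by
  have mR := Rdiff_meas hW hV hu hv hW1 hV1 huM hvM
  have bR := Rdiff_bd hW1 hV1 huM hvM
  set ν : Measure ℝ := volume.restrict (Icc (0:ℝ) t) with hν
  have hνt : ν.real univ = t := by simp [hν, Measure.real, ht0]
  set w := ∫ x, ∫ y, (W x y - V x y) ^ 2 ∂mu01 ∂mu01 with hw
  have hw0 : 0 ≤ w := integral_nonneg fun x => integral_nonneg fun y => sq_nonneg _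
  have hpt : ∀ᵐ x ∂mu01, (u x t - v x t) ^ 2 ≤ 2 * (g x - h x) ^ 2 +
      2 * t * ∫ s, Rdiff W V u v x s ^ 2 ∂ν := by
    filter_upwards [eu, ev] with x hx1 hx2
    have e : u x t - v x t = (g x - h x) + ∫ s, Rdiff W V u v x s ∂ν := by
      simp_rw [Rdiff_eq hW hV hu hv hW1 hV1 huM hvM]
      rw [integral_sub (int_rhs_s hW hu hW1 huM x t) (int_rhs_s hV hv hV1 hvM x t), hx1, hx2]
      ring
    have c := cs_ineq (ν := ν) (f := fun s => Rdiff W V u v x s)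
      (mR.comp (by fun_prop : Measurable (fun s : ℝ => (x, s)))) _ (bR x)
    rw [hνt] at c
    rw [e]
    nlinarith [sq_nonneg ((g x - h x) - ∫ s, Rdiff W V u v x s ∂ν)]
  have mR2 : Measurable (fun p : ℝ × ℝ => Rdiff W V u v p.1 p.2 ^ 2) := by fun_prop
  have iR : Integrable (fun p : ℝ × ℝ => Rdiff W V u v p.1 p.2 ^ 2) (mu01.prod ν) :=
    bint mR2 _ fun p => sq_bd (bR p.1 p.2)
  have i1 := hgi.const_mul 2
  have i2 := (iR.integral_prod_left).const_mul (2 * t)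
  have sw : ∫ x, ∫ s, Rdiff W V u v x s ^ 2 ∂ν ∂mu01 = ∫ s, ∫ x, Rdiff W V u v x s ^ 2 ∂mu01 ∂ν :=
    integral_integral_swap iR
  have iphi : Integrable (phi u v) ν := bint (phi_meas hu hv) _ (phi_bd huM hvM)
  have hS : ∫ s, ∫ x, Rdiff W V u v x s ^ 2 ∂mu01 ∂ν ≤ 8 * M ^ 2 * w * t + 8 * ∫ s, phi u v s ∂ν := by
    calc _ ≤ ∫ s, (8 * M ^ 2 * w + 8 * phi u v s) ∂ν :=
          integral_mono iR.integral_prod_right ((integrable_const _).add (iphi.const_mul 8))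
            fun s => int_Rsq_x hW hV hu hv hW1 hV1 huM hvM s
      _ = _ := by
          rw [integral_add (integrable_const _) (iphi.const_mul 8), integral_const,
            integral_const_mul, hνt, smul_eq_mul]
          ring
  have hP0 : 0 ≤ ∫ s, phi u v s ∂ν := integral_nonneg fun s => phi_nonneg s
  calc phi u v t ≤ ∫ x, (2 * (g x - h x) ^ 2 +
      2 * t * ∫ s, Rdiff W V u v x s ^ 2 ∂ν) ∂mu01 :=
        integral_mono_ae (int_D hu hv huM hvM t) (i1.add i2) hpt
    _ = 2 * (∫ x, (g x - h x) ^ 2 ∂mu01) +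
        2 * t * ∫ s, ∫ x, Rdiff W V u v x s ^ 2 ∂mu01 ∂ν := by
        rw [integral_add i1 i2, integral_const_mul, integral_const_mul, sw]
    _ ≤ 2 * (∫ x, (g x - h x) ^ 2 ∂mu01) +
        2 * t * (8 * M ^ 2 * w * t + 8 * ∫ s, phi u v s ∂ν) := by gcongr
    _ = 2 * (∫ x, (g x - h x) ^ 2 ∂mu01) + 16 * t ^ 2 * M ^ 2 * w
        + 16 * t * ∫ s, phi u v s ∂ν := by ring
    _ ≤ _ := by gcongr

end energy

theorem gronwall_sup {f : ℝ → ℝ} {T a K C : ℝ} (hK : 0 < K) (ha : 0 ≤ a)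
    (hf : Measurable f) (hC : ∀ s, |f s| ≤ C)
    (h : ∀ t ∈ Icc (0:ℝ) T, f t ≤ a + K * ∫ s in Icc (0:ℝ) t, f s) :
    ∀ t ∈ Icc (0:ℝ) T, f t ≤ 2 * a * Real.exp (2 * K * T) := by
  -- iterate: if f s ≤ B exp(2Ks) on [0,T], then f t ≤ (a + B/2) exp (2Kt)
  have step : ∀ B, 0 ≤ B → (∀ t ∈ Icc (0:ℝ) T, f t ≤ B * Real.exp (2 * K * t)) →
      ∀ t ∈ Icc (0:ℝ) T, f t ≤ (a + B / 2) * Real.exp (2 * K * t) := by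
    intro B hB hBf t ht
    have e : ∫ s in Icc (0:ℝ) t, B * Real.exp (2 * K * s) =
        B * ((Real.exp (2 * K * t) - 1) / (2 * K)) := by
      rw [integral_const_mul, integral_Icc_eq_integral_Ioc,
        ← intervalIntegral.integral_of_le ht.1,
        intervalIntegral.integral_comp_mul_left (fun s => Real.exp s) (by positivity), integral_exp]
      simp [div_eq_inv_mul]
    have c : ContinuousOn (fun s => B * Real.exp (2 * K * s)) (Icc 0 t) := by fun_prop
    have m : ∫ s in Icc (0:ℝ) t, f s ≤ ∫ s in Icc (0:ℝ) t, B * Real.exp (2 * K * s) :=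
      setIntegral_mono_on (bint hf C hC) (c.integrableOn_compact isCompact_Icc) measurableSet_Icc
        fun s hs => hBf s ⟨hs.1, hs.2.trans ht.2⟩
    have h1 : 1 ≤ Real.exp (2 * K * t) := Real.one_le_exp (by have := ht.1; positivity)
    have h2 := h t ht
    rw [e] at m
    have h3 : K * (B * ((Real.exp (2 * K * t) - 1) / (2 * K))) = B / 2 * (Real.exp (2 * K * t) - 1) := by
      field_simp
    have h4 := mul_le_mul_of_nonneg_left m hK.le
    rw [h3] at h4
    nlinarith
  have hC0 : 0 ≤ C := (abs_nonneg _).trans (hC 0)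
  have it : ∀ n : ℕ, ∀ t ∈ Icc (0:ℝ) T, f t ≤ (2 * a + C * (1 / 2) ^ n) * Real.exp (2 * K * t) := by
    intro n
    induction n with
    | zero =>
      intro t ht
      have h1 : 1 ≤ Real.exp (2 * K * t) := Real.one_le_exp (by have := ht.1; positivity)
      have := (abs_le.1 (hC t)).2
      simp only [pow_zero, mul_one]
      nlinarith
    | succ n ih =>
      intro t ht
      refine (step _ (by positivity) ih t ht).trans (le_of_eq ?_)
      rw [pow_succ]; ring
  intro t ht
  have lim : Tendsto (fun n : ℕ => (2 * a + C * (1 / 2 : ℝ) ^ n) * Real.exp (2 * K * t)) atTop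
      (nhds ((2 * a + C * 0) * Real.exp (2 * K * t))) :=
    ((tendsto_pow_atTop_nhds_zero_of_lt_one (by norm_num) (by norm_num)).const_mul C
      |>.const_add (2 * a)).mul_const _
  have := ge_of_tendsto' lim fun n => it n t ht
  refine this.trans ?_
  rw [mul_zero, add_zero]
  have := ht.2
  gcongr

/-- truncation -/
def clip (M a : ℝ) : ℝ := max (-M) (min M a)

theorem clip_bd {M : ℝ} (hM : 0 ≤ M) (a : ℝ) : |clip M a| ≤ M :=
  abs_le.2 ⟨le_max_left _ _, max_le (by linarith) (min_le_left _ _)⟩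

theorem clip_eq {M a : ℝ} (h : |a| ≤ M) : clip M a = a := by
  have := abs_le.1 h
  rw [clip, min_eq_right this.2, max_eq_right this.1]

theorem clip_meas (M : ℝ) : Measurable (clip M) := by
  unfold clip; fun_prop

theorem trunc_sol {W : ℝ → ℝ → ℝ} {g : ℝ → ℝ} {u : ℝ → ℝ → ℝ} (h : IsSolution W g u)
    {T : ℝ} (hT : 0 < T) : ∃ (M : ℝ) (v : ℝ → ℝ → ℝ), Measurable (Function.uncurry v) ∧
      (∀ x s, |v x s| ≤ M) ∧ (∀ t ∈ Icc (0:ℝ) T, ∀ᵐ x ∂mu01, v x t = u x t) ∧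
      ∀ t ∈ Icc (0:ℝ) T, ∀ᵐ x ∂mu01, v x t = g x +
        ∫ s in Icc (0:ℝ) t, ∫ y, W x y * (v y s - v x s) ∂mu01 := by
  obtain ⟨hm, hb, he⟩ := h
  obtain ⟨M, hM⟩ := hb T hT
  have hvm : Measurable (Function.uncurry fun x s => clip |M| (u x s)) := (clip_meas _).comp hm
  have hvu : ∀ t ∈ Icc (0:ℝ) T, ∀ᵐ x ∂mu01, clip |M| (u x t) = u x t := by
    intro t ht
    filter_upwards [hM t ht] with x hx
    exact clip_eq (hx.trans (le_abs_self _))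
  refine ⟨|M|, fun x s => clip |M| (u x s), hvm, fun x s => clip_bd (abs_nonneg _) _, hvu, ?_⟩
  intro t ht
  have hms : MeasurableSet {p : ℝ × ℝ | clip |M| (u p.1 p.2) = u p.1 p.2} :=
    measurableSet_eq_fun hvm hm
  have h1 : ∀ᵐ x ∂mu01, ∀ᵐ s ∂(volume.restrict (Icc (0:ℝ) t)), clip |M| (u x s) = u x s := by
    rw [Measure.ae_ae_comm hms]
    filter_upwards [ae_restrict_mem measurableSet_Icc] with s hs
    exact hvu s ⟨hs.1, hs.2.trans ht.2⟩
  filter_upwards [h1, hvu t ht, he t ht.1] with x hx1 hx2 hx3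
  rw [hx2, hx3]
  congr 1
  refine integral_congr_ae ?_
  filter_upwards [hx1, ae_restrict_mem measurableSet_Icc] with s hs1 hs2
  refine integral_congr_ae ?_
  filter_upwards [hvu s ⟨hs2.1, hs2.2.trans ht.2⟩] with y hy
  simp only [hy, hs1]

/-- center of block -/
def blkc (n : ℕ) (x : ℝ) : ℝ := ((⌈(n : ℝ) * x⌉ : ℤ) : ℝ) / n - 1 / (2 * n)

theorem Icc_blk (n : ℕ) (x : ℝ) :
    Icc (((⌈(n : ℝ) * x⌉ : ℤ) : ℝ) / n - 1 / n) (((⌈(n : ℝ) * x⌉ : ℤ) : ℝ) / n) =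
      Metric.closedBall (blkc n x) (1 / (2 * n)) := by
  have e : (1 : ℝ) / n = 1 / (2 * n) + 1 / (2 * n) := by
    rcases Nat.eq_zero_or_pos n with rfl | h
    · simp
    · field_simp; norm_num
  rw [Real.closedBall_eq_Icc, blkc, e]
  congr 1 <;> ring

theorem restrict_blk (n : ℕ) (x : ℝ) : (volume : Measure ℝ).restrict (blockIoc n x) =
    volume.restrict (Metric.closedBall (blkc n x) (1 / (2 * n))) := by
  rw [← Icc_blk, blockIoc, restrict_Ioc_eq_restrict_Icc]

theorem restrict_blk2 (n : ℕ) (x y : ℝ) :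
    (volume : Measure (ℝ × ℝ)).restrict (blockIoc n x ×ˢ blockIoc n y) =
    volume.restrict (Metric.closedBall (blkc n x, blkc n y) (1 / (2 * n))) := by
  rw [← closedBall_prod_same, Measure.volume_eq_prod, ← Measure.prod_restrict,
    ← Measure.prod_restrict, restrict_blk, restrict_blk]

theorem vol_blk (n : ℕ) (x : ℝ) : (volume : Measure ℝ).real (blockIoc n x) = 1 / n := by
  rw [blockIoc, Measure.real, Real.volume_Ioc, ENNReal.toReal_ofReal] <;> ring_nf
  positivity

theorem vol_blk2 (n : ℕ) (x y : ℝ) :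
    (volume : Measure (ℝ × ℝ)).real (blockIoc n x ×ˢ blockIoc n y) = (1 / n) ^ 2 := by
  rw [Measure.volume_eq_prod, measureReal_prod_prod, vol_blk, vol_blk, sq]

theorem mem_blk {n : ℕ} (hn : 0 < n) (x : ℝ) : x ∈ blockIoc n x := by
  have hn' : (0:ℝ) < n := by exact_mod_cast hn
  have h1 := Int.le_ceil ((n:ℝ) * x)
  have h2 := Int.ceil_lt_add_one ((n:ℝ) * x)
  constructor
  · rw [← sub_div, div_lt_iff₀ hn']; linarith
  · rw [le_div_iff₀ hn']; linarith

theorem mem_ball {n : ℕ} (hn : 0 < n) (x : ℝ) : x ∈ Metric.closedBall (blkc n x) (1 / (2 * n)) := by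
  rw [← Icc_blk]; exact Ioc_subset_Icc_self (mem_blk hn x)

theorem rad_lim : Tendsto (fun n : ℕ => (1:ℝ) / (2 * n)) atTop (nhdsWithin 0 (Ioi 0)) := by
  refine tendsto_nhdsWithin_iff.2 ⟨?_, ?_⟩
  · have := (tendsto_one_div_atTop_nhds_zero_nat (𝕜 := ℝ)).const_mul (1 / 2)
    rw [mul_zero] at this
    refine this.congr fun n => ?_
    rw [one_div_mul_one_div]
  · filter_upwards [eventually_gt_atTop 0] with n hn
    have hn' : (0:ℝ) < n := by exact_mod_cast hn
    exact mem_Ioi.2 (by positivity)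

theorem avgG_lim {g : ℝ → ℝ} (hg : Measurable g) {C : ℝ} (hC : ∀ x, |g x| ≤ C) :
    ∀ᵐ x ∂(volume : Measure ℝ), Tendsto (fun n => blockAvgG n g x) atTop (nhds (g x)) := by
  have hl : LocallyIntegrable g volume := (locallyIntegrable_const C).mono hg.aestronglyMeasurable
    (Eventually.of_forall fun x => (hC x).trans (le_abs_self _))
  filter_upwards [IsUnifLocDoublingMeasure.ae_tendsto_average (μ := volume) hl 1] with x hx
  have := hx (fun n : ℕ => blkc n x) _ rad_lim (by
    filter_upwards [eventually_gt_atTop 0] with n hn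
    rw [one_mul]; exact mem_ball hn x)
  refine this.congr fun n => ?_
  rw [← restrict_blk, setAverage_eq, vol_blk, blockAvgG, smul_eq_mul, one_div, inv_inv]

theorem avgW_lim {W : ℝ → ℝ → ℝ} (hW : Measurable (Function.uncurry W)) {C : ℝ}
    (hC : ∀ x y, |W x y| ≤ C) :
    ∀ᵐ p ∂(volume : Measure (ℝ × ℝ)),
      Tendsto (fun n => blockAvgW n W p.1 p.2) atTop (nhds (W p.1 p.2)) := by
  have hl : LocallyIntegrable (fun p : ℝ × ℝ => W p.1 p.2) volume :=
    (locallyIntegrable_const C).mono (Measurable.aestronglyMeasurable hW)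
    (Eventually.of_forall fun x => (hC _ _).trans (le_abs_self _))
  filter_upwards [IsUnifLocDoublingMeasure.ae_tendsto_average (μ := volume) hl 1] with p hp
  have := hp (fun n : ℕ => (blkc n p.1, blkc n p.2)) _ rad_lim (by
    filter_upwards [eventually_gt_atTop 0] with n hn
    rw [one_mul, ← closedBall_prod_same]; exact ⟨mem_ball hn _, mem_ball hn _⟩)
  refine this.congr fun n => ?_
  rw [← restrict_blk2, setAverage_eq, vol_blk2, blockAvgW, smul_eq_mul, one_div, inv_pow, inv_inv]

theorem avgG_bd {g : ℝ → ℝ} {C : ℝ} (hC : ∀ x, |g x| ≤ C) (n : ℕ) (x : ℝ) :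
    |blockAvgG n g x| ≤ C := by
  have hC0 : 0 ≤ C := (abs_nonneg _).trans (hC 0)
  have h := norm_setIntegral_le_of_norm_le_const (μ := volume) (s := blockIoc n x) (f := g)
    (by simp [blockIoc]) (fun x _ => hC x)
  rw [vol_blk, Real.norm_eq_abs] at h
  rw [blockAvgG, abs_mul, Nat.abs_cast]
  rcases Nat.eq_zero_or_pos n with rfl | hn
  · simpa using hC0
  · have hn' : (0:ℝ) < n := by exact_mod_cast hn
    calc _ ≤ (n:ℝ) * (C * (1 / n)) := by gcongr
      _ = C := by field_simp

theorem avgW_bd {W : ℝ → ℝ → ℝ} {C : ℝ} (hC : ∀ x y, |W x y| ≤ C) (n : ℕ) (x y : ℝ) :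
    |blockAvgW n W x y| ≤ C := by
  have hC0 : 0 ≤ C := (abs_nonneg _).trans (hC 0 0)
  have h := norm_setIntegral_le_of_norm_le_const (μ := volume) (s := blockIoc n x ×ˢ blockIoc n y)
    (f := fun p : ℝ × ℝ => W p.1 p.2)
    (by
      rw [Measure.volume_eq_prod, Measure.prod_prod]
      exact ENNReal.mul_lt_top (by simp [blockIoc]) (by simp [blockIoc])) (fun x _ => hC _ _)
  rw [vol_blk2, Real.norm_eq_abs] at h
  rw [blockAvgW, abs_mul, abs_pow, Nat.abs_cast]
  rcases Nat.eq_zero_or_pos n with rfl | hn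
  · simpa using hC0
  · have hn' : (0:ℝ) < n := by exact_mod_cast hn
    calc _ ≤ (n:ℝ) ^ 2 * (C * (1 / n) ^ 2) := by gcongr
      _ = C := by field_simp

theorem avgG_meas (g : ℝ → ℝ) (n : ℕ) : Measurable (blockAvgG n g) := by
  let F : ℤ → ℝ := fun k => (n:ℝ) * ∫ y in Ioc ((k:ℝ) / n - 1 / n) ((k:ℝ) / n), g y
  have hF : Measurable F := measurable_of_countable F
  exact hF.comp (Int.measurable_ceil.comp (measurable_const_mul (n:ℝ)))

theorem avgW_meas (W : ℝ → ℝ → ℝ) (n : ℕ) : Measurable (Function.uncurry (blockAvgW n W)) := by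
  let F : ℤ × ℤ → ℝ := fun k => (n:ℝ) ^ 2 * ∫ p in
    (Ioc ((k.1:ℝ) / n - 1 / n) ((k.1:ℝ) / n)) ×ˢ (Ioc ((k.2:ℝ) / n - 1 / n) ((k.2:ℝ) / n)),
      W p.1 p.2
  have hF : Measurable F := measurable_of_countable F
  have hc : Measurable (fun x : ℝ => ⌈(n:ℝ) * x⌉) :=
    Int.measurable_ceil.comp (measurable_const_mul (n:ℝ))
  have hc2 : Measurable (fun p : ℝ × ℝ => (⌈(n:ℝ) * p.1⌉, ⌈(n:ℝ) * p.2⌉)) :=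
    (hc.comp measurable_fst).prodMk (hc.comp measurable_snd)
  have e : Function.uncurry (blockAvgW n W) =
      fun p : ℝ × ℝ => F (⌈(n:ℝ) * p.1⌉, ⌈(n:ℝ) * p.2⌉) := by
    funext p
    simp only [Function.uncurry, F, blockAvgW, blockIoc]
  rw [e]
  exact hF.comp hc2

theorem G_conv {g : ℝ → ℝ} (hg : Measurable g) {C : ℝ} (hC : ∀ x, |g x| ≤ C) :
    Tendsto (fun n => ∫ x, (g x - blockAvgG n g x) ^ 2 ∂mu01) atTop (nhds 0) := by
  have := tendsto_integral_of_dominated_convergence (μ := mu01)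
    (F := fun n x => (g x - blockAvgG n g x) ^ 2) (f := fun _ => 0) (fun _ => (C + C) ^ 2)
    (fun n => by
      have := avgG_meas g n
      exact Measurable.aestronglyMeasurable (by fun_prop))
    (integrable_const _)
    (fun n => Eventually.of_forall fun x =>
      sq_bd ((abs_sub _ _).trans (add_le_add (hC _) (avgG_bd hC n x))))
    (by
      filter_upwards [ae_restrict_of_ae (avgG_lim hg hC)] with x hx
      simpa using (hx.const_sub (g x)).pow 2)
  simpa using this

theorem W_conv {W : ℝ → ℝ → ℝ} (hW : Measurable (Function.uncurry W)) {C : ℝ}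
    (hC : ∀ x y, |W x y| ≤ C) :
    Tendsto (fun n => ∫ x, ∫ y, (W x y - blockAvgW n W x y) ^ 2 ∂mu01 ∂mu01) atTop (nhds 0) := by
  have hm : ∀ n, Measurable (fun p : ℝ × ℝ => (W p.1 p.2 - blockAvgW n W p.1 p.2) ^ 2) :=
    fun n => meas_D hW (avgW_meas W n)
  have hb : ∀ n, ∀ p : ℝ × ℝ, |(W p.1 p.2 - blockAvgW n W p.1 p.2) ^ 2| ≤ (C + C) ^ 2 :=
    fun n p => bd_D hC (avgW_bd hC n) _ _
  have e : ∀ n, ∫ x, ∫ y, (W x y - blockAvgW n W x y) ^ 2 ∂mu01 ∂mu01 =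
      ∫ p, (W p.1 p.2 - blockAvgW n W p.1 p.2) ^ 2 ∂(mu01.prod mu01) := fun n =>
    (integral_prod _ (bint (hm n) _ (hb n))).symm
  simp_rw [e]
  have := tendsto_integral_of_dominated_convergence (μ := mu01.prod mu01)
    (F := fun n p => (W p.1 p.2 - blockAvgW n W p.1 p.2) ^ 2) (f := fun _ => 0)
    (fun _ => (C + C) ^ 2)
    (fun n => (hm n).aestronglyMeasurable)
    (integrable_const _)
    (fun n => Eventually.of_forall (hb n))
    (by
      have : mu01.prod mu01 = (volume : Measure (ℝ × ℝ)).restrict (Icc 0 1 ×ˢ Icc 0 1) := by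
        rw [mu01, Measure.prod_restrict, Measure.volume_eq_prod]
      rw [this]
      filter_upwards [ae_restrict_of_ae (avgW_lim hW hC)] with p hp
      simpa using (hp.const_sub (W p.1 p.2)).pow 2)
  simpa using this

theorem blk_sub {n : ℕ} (hn : 0 < n) {x : ℝ} (hx : x ∈ Ioc (0:ℝ) 1) : blockIoc n x ⊆ Icc 0 1 := by
  have hn' : (0:ℝ) < n := by exact_mod_cast hn
  have h1 : (1:ℤ) ≤ ⌈(n:ℝ) * x⌉ := Int.one_le_ceil_iff.2 (mul_pos hn' hx.1)
  have h2 : ⌈(n:ℝ) * x⌉ ≤ (n:ℤ) := Int.ceil_le.2 (by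
    have := hx.2
    push_cast
    nlinarith)
  have h1' : (1:ℝ) ≤ (⌈(n:ℝ) * x⌉ : ℤ) := by exact_mod_cast h1
  have h2' : ((⌈(n:ℝ) * x⌉ : ℤ) : ℝ) ≤ n := by exact_mod_cast h2
  refine Ioc_subset_Icc_self.trans (Icc_subset_Icc ?_ ?_)
  · rw [← sub_div]; exact div_nonneg (by linarith) hn'.le
  · exact (div_le_one hn').2 h2'

theorem avgG_congr {g g' : ℝ → ℝ} (h : ∀ᵐ x ∂mu01, g x = g' x) (n : ℕ) :
    ∀ᵐ x ∂mu01, blockAvgG n g x = blockAvgG n g' x := by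
  have : mu01 = volume.restrict (Ioc (0:ℝ) 1) := by rw [mu01, restrict_Ioc_eq_restrict_Icc]
  rcases Nat.eq_zero_or_pos n with rfl | hn
  · simp [blockAvgG]
  · rw [this]
    filter_upwards [ae_restrict_mem measurableSet_Ioc] with x hx
    rw [blockAvgG, blockAvgG]
    congr 1
    exact integral_congr_ae (ae_restrict_of_ae_restrict_of_subset (blk_sub hn hx) h)

/-- Solutions for the block averages converge to the continuum solution in
`C([0,T]; L²([0,1]))`-norm. -/
theorem blockAvg_solutions_converge
    (W : ℝ → ℝ → ℝ) (g : ℝ → ℝ) (hW : IsKernel W) (hg : IsLinf g)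
    (u : ℝ → ℝ → ℝ) (hu : IsSolution W g u)
    (un : ℕ → ℝ → ℝ → ℝ)
    (hun : ∀ n : ℕ, IsSolution (blockAvgW n W) (blockAvgG n g) (un n)) :
    ∀ T > (0:ℝ), ∀ ε > (0:ℝ), ∃ N : ℕ, ∀ n ≥ N, ∀ t ∈ Set.Icc (0:ℝ) T,
      L2normI (fun x => u x t - un n x t) ≤ ε := by
  intro T hT ε hε
  have hW1 : ∀ x y, |W x y| ≤ 1 := fun x y => abs_le.2 (hW.2.2 x y)
  obtain ⟨hgm, C, hgC⟩ := hg
  have hgg : ∀ᵐ x ∂mu01, g x = clip |C| (g x) := by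
    filter_upwards [hgC] with x hx
    exact (clip_eq (hx.trans (le_abs_self _))).symm
  set g' : ℝ → ℝ := fun x => clip |C| (g x) with hg'
  have hg'm : Measurable g' := (clip_meas _).comp hgm
  have hg'C : ∀ x, |g' x| ≤ |C| := fun x => clip_bd (abs_nonneg _) _
  obtain ⟨M, ũ, hũm, hũM, hũu, hũe⟩ := trunc_sol hu hT
  set A : ℕ → ℝ := fun n => 2 * (∫ x, (g' x - blockAvgG n g' x) ^ 2 ∂mu01) +
      16 * T ^ 2 * M ^ 2 * (∫ x, ∫ y, (W x y - blockAvgW n W x y) ^ 2 ∂mu01 ∂mu01) with hA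
  have hAl : Tendsto (fun n => 2 * A n * Real.exp (2 * (16 * T) * T)) atTop (nhds 0) := by
    have := ((((G_conv hg'm hg'C).const_mul 2).add
      ((W_conv hW.1 hW1).const_mul (16 * T ^ 2 * M ^ 2))).const_mul 2).mul_const
        (Real.exp (2 * (16 * T) * T))
    simpa using this
  have hA0 : ∀ n, 0 ≤ A n := fun n => by
    have h1 : 0 ≤ ∫ x, (g' x - blockAvgG n g' x) ^ 2 ∂mu01 := integral_nonneg fun x => sq_nonneg _
    have h2 : 0 ≤ ∫ x, ∫ y, (W x y - blockAvgW n W x y) ^ 2 ∂mu01 ∂mu01 :=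
      integral_nonneg fun x => integral_nonneg fun y => sq_nonneg _
    positivity
  obtain ⟨N, hN⟩ := eventually_atTop.1 (hAl.eventually_le_const (show (0:ℝ) < ε ^ 2 by positivity))
  refine ⟨N, fun n hn t ht => ?_⟩
  obtain ⟨M', v, hvm, hvM, hvu, hve⟩ := trunc_sol (hun n) hT
  have key := gronwall_sup (f := phi ũ v) (T := T) (a := A n) (K := 16 * T) (C := (M + M') ^ 2)
    (by positivity) (hA0 n) (phi_meas hũm hvm) (phi_bd hũM hvM) (by
      intro t ht
      refine energy_ineq hW.1 (avgW_meas W n) hũm hvm hW1 (avgW_bd hW1 n) hũM hvM ht.1 ht.2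
        ?_ ?_ ?_
      · have := avgG_meas g' n
        exact bint (by fun_prop) _ fun x =>
          sq_bd ((abs_sub _ _).trans (add_le_add (hg'C _) (avgG_bd hg'C n x)))
      · filter_upwards [hũe t ht, hgg] with x h1 h2
        rw [h1, h2]
      · filter_upwards [hve t ht, avgG_congr hgg n] with x h1 h2
        rw [h1, h2]) t ht
  have e : ∫ x in Icc (0:ℝ) 1, (u x t - un n x t) ^ 2 = phi ũ v t := by
    refine integral_congr_ae ?_
    change ∀ᵐ x ∂mu01, _
    filter_upwards [hũu t ht, hvu t ht] with x h1 h2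
    rw [h1, h2]
  rw [L2normI, e]
  exact Real.sqrt_le_iff.2 ⟨hε.le, key.trans (hN n hn)⟩

end
end

section
/- Let W be a kernel, g ∈ L∞([0,1]), and let u be the solution of the continuum voting model IVP for (W, g). If u reaches consensus on [0,1], then u is a bounded solution, i.e. sup_{t≥0} ess sup_{x∈[0,1]} |u(x,t)| < ∞. -/
open MeasureTheory Filter Set

noncomputable section

instance mu01_prob : IsProbabilityMeasure mu01 := ⟨by simp [mu01]⟩

lemma mu01_int (f : ℝ → ℝ) : ∫ y in Set.Icc (0:ℝ) 1, f y = ∫ y, f y ∂mu01 := rfl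

lemma antisymm_zero (F : ℝ → ℝ → ℝ) (hF : Integrable (Function.uncurry F) (mu01.prod mu01))
    (ha : ∀ x y, F x y = - F y x) : ∫ x, ∫ y, F x y ∂mu01 ∂mu01 = 0 := by
  have h1 := integral_integral_swap (f := F) hF
  have h2 : ∫ y, ∫ x, F x y ∂mu01 ∂mu01 = - ∫ x, ∫ y, F x y ∂mu01 ∂mu01 := by
    rw [← integral_neg]
    congr 1
    ext y
    rw [← integral_neg]
    congr 1
    ext x
    exact ha x y
  linarith

lemma mean_const (W : ℝ → ℝ → ℝ) (g : ℝ → ℝ) (u : ℝ → ℝ → ℝ)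
    (hW : IsKernel W) (hg : IsLinf g) (hu : IsSolution W g u) (t : ℝ) (ht : 0 ≤ t) :
    ∫ x, u x t ∂mu01 = ∫ x, g x ∂mu01 := by
  obtain ⟨hWm, hWs, hWb⟩ := hW
  obtain ⟨hgm, Mg, hMg⟩ := hg
  obtain ⟨hum, hub, hue⟩ := hu
  obtain ⟨M, hM⟩ := hub (t + 1) (by linarith)
  have hgi : Integrable g mu01 :=
    Integrable.of_bound hgm.aestronglyMeasurable Mg (by simpa using hMg)
  have hFm : Measurable (fun p : (ℝ × ℝ) × ℝ => W p.1.1 p.2 * (u p.2 p.1.2 - u p.1.1 p.1.2)) := by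
    have a1 : Measurable (fun p : (ℝ × ℝ) × ℝ => W p.1.1 p.2) :=
      hWm.comp (f := fun p : (ℝ × ℝ) × ℝ => (p.1.1, p.2)) (by fun_prop)
    have a2 : Measurable (fun p : (ℝ × ℝ) × ℝ => u p.2 p.1.2) :=
      hum.comp (f := fun p : (ℝ × ℝ) × ℝ => (p.2, p.1.2)) (by fun_prop)
    have a3 : Measurable (fun p : (ℝ × ℝ) × ℝ => u p.1.1 p.1.2) :=
      hum.comp (f := fun p : (ℝ × ℝ) × ℝ => (p.1.1, p.1.2)) (by fun_prop)
    exact a1.mul (a2.sub a3)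
  have hb : ∀ s, ∀ x y, |u x s| ≤ M → |u y s| ≤ M → |W x y * (u y s - u x s)| ≤ 2 * M := by
    intro s x y hx hy
    rw [abs_mul]
    have h1 : |W x y| ≤ 1 := abs_le.2 (hWb x y)
    have h2 : |u y s - u x s| ≤ 2 * M := (abs_sub _ _).trans (by linarith)
    calc _ ≤ 1 * (2 * M) := mul_le_mul h1 h2 (abs_nonneg _) zero_le_one
      _ = _ := one_mul _
  set h : ℝ → ℝ → ℝ := fun s x => ∫ y, W x y * (u y s - u x s) ∂mu01 with hdef
  have hhm : StronglyMeasurable (fun p : ℝ × ℝ => h p.2 p.1) :=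
    hFm.stronglyMeasurable.integral_prod_right'
  have hhm' : Measurable (Function.uncurry h) := hhm.measurable.comp measurable_swap
  set ν : Measure ℝ := volume.restrict (Set.Icc (0:ℝ) t) with hν
  have hhi : Integrable (Function.uncurry h) (ν.prod mu01) := by
    refine Integrable.of_bound hhm'.aestronglyMeasurable (2 * M) ?_
    refine (Measure.ae_prod_iff_ae_ae ?_).2 ?_
    · exact measurableSet_le hhm'.norm measurable_const
    · refine (ae_restrict_iff' measurableSet_Icc).2 (Eventually.of_forall fun s hs => ?_)
      have hs' := hM s ⟨hs.1, by linarith [hs.2]⟩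
      filter_upwards [hs'] with x hx
      have := norm_integral_le_of_norm_le_const (μ := mu01)
        (f := fun y => W x y * (u y s - u x s)) (C := 2 * M)
        (by filter_upwards [hs'] with y hy using hb s x y hx hy)
      simpa [Function.uncurry, hdef] using this
  have hz : ∀ s ∈ Set.Icc (0:ℝ) t, ∫ x, h s x ∂mu01 = 0 := by
    intro s hs
    have hs' := hM s ⟨hs.1, by linarith [hs.2]⟩
    have hm : Measurable (Function.uncurry fun x y => W x y * (u y s - u x s)) :=
      hFm.comp (f := fun p : ℝ × ℝ => ((p.1, s), p.2)) (by fun_prop)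
    refine antisymm_zero (fun x y => W x y * (u y s - u x s)) ?_ ?_
    · refine Integrable.of_bound hm.aestronglyMeasurable (2 * M) ?_
      refine (Measure.ae_prod_iff_ae_ae ?_).2 ?_
      · exact measurableSet_le hm.norm measurable_const
      · filter_upwards [hs'] with x hx
        filter_upwards [hs'] with y hy using hb s x y hx hy
    · intro x y
      rw [hWs x y]; ring
  have e1 : ∫ x, u x t ∂mu01 = ∫ x, (g x + ∫ s, h s x ∂ν) ∂mu01 := integral_congr_ae (hue t ht)
  have hhr : Integrable (fun x => ∫ s, h s x ∂ν) mu01 := hhi.integral_prod_right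
  rw [e1, integral_add hgi hhr, ← integral_integral_swap hhi,
    setIntegral_congr_fun measurableSet_Icc hz]
  simp

/-- If the solution reaches consensus then it is a bounded solution. -/
theorem consensus_implies_bounded (W : ℝ → ℝ → ℝ) (g : ℝ → ℝ) (u : ℝ → ℝ → ℝ)
    (hW : IsKernel W) (hg : IsLinf g) (hu : IsSolution W g u)
    (hcons : ReachesConsensusOn u (Set.Icc (0:ℝ) 1)) :
    BoundedSolution u := by
  have hmean := mean_const W g u hW hg hu
  obtain ⟨hum, hub, hue⟩ := hu
  obtain ⟨T, hT⟩ := hcons 1 one_pos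
  obtain ⟨M, hM⟩ := hub (max T 1) (by positivity)
  refine ⟨max M (|∫ x, g x ∂mu01| + 1), fun t ht => ?_⟩
  rcases le_total t (max T 1) with h | h
  · filter_upwards [hM t ⟨ht, h⟩] with x hx using hx.trans (le_max_left _ _)
  · have hc : ∀ᵐ p : ℝ × ℝ ∂(mu01.prod mu01), |u p.1 t - u p.2 t| ≤ 1 :=
      hT t ((le_max_left _ _).trans h)
    obtain ⟨M', hM'⟩ := hub (t + 1) (by linarith)
    have hi : Integrable (fun x => u x t) mu01 :=
      Integrable.of_bound (hum.comp (f := fun x : ℝ => (x, t)) (by fun_prop)).aestronglyMeasurable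
        M' (by simpa using hM' t ⟨ht, by linarith⟩)
    filter_upwards [Measure.ae_ae_of_ae_prod hc] with x hx
    have h1 := norm_integral_le_of_norm_le_const (μ := mu01)
        (f := fun y => u x t - u y t) (C := 1) hx
    rw [integral_sub (integrable_const _) hi, hmean t ht] at h1
    simp at h1
    refine le_trans ?_ (le_max_right _ _)
    have h2 := abs_sub_abs_le_abs_sub (u x t) (∫ x, g x ∂mu01)
    linarith

end
end

section
/- Let {J_i}_{i∈I} be a countable partition of [0,1] into intervals with λ(J_i) > 0, and let W be a kernel such that W(x,y) = 0 for almost every pair (x,y) with x and y in different intervals of the partition, and such that for each i ∈ I the restriction of W to J_i × J_i is connected, i.e. for every measurable S ⊆ J_i with 0 < λ(S) < λ(J_i) one has ∫_{S×(J_i∖S)} |W(x,y)| dx dy > 0. Let g ∈ L∞([0,1]) and let u be the solution of the continuum voting model IVP for (W, g). If u reaches consensus on [0,1], then there is a constant C such that (1/λ(J_i)) ∫_{J_i} g(y) dy = C for every i ∈ I. -/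
open MeasureTheory Filter Set

noncomputable section

lemma solution_conserved (Ji : Set ℝ) (hm : MeasurableSet Ji) (hsub : Ji ⊆ Set.Icc (0:ℝ) 1)
    (W : ℝ → ℝ → ℝ) (hW : IsKernel W)
    (hWb : ∀ᵐ x : ℝ, x ∈ Ji → ∀ᵐ y : ℝ, y ∈ Set.Icc (0:ℝ) 1 \ Ji → W x y = 0)
    (g : ℝ → ℝ) (hg : IsLinf g)
    (u : ℝ → ℝ → ℝ) (hu : IsSolution W g u) (t : ℝ) (ht : 0 < t) :
    IntegrableOn (fun x => u x t) Ji ∧ ∫ x in Ji, u x t = ∫ x in Ji, g x := by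
  obtain ⟨hum, hub, hus⟩ := hu
  obtain ⟨hgm, Mg, hgb⟩ := hg
  obtain ⟨hWm, hWs, hWI⟩ := hW
  obtain ⟨M, hM⟩ := hub t ht
  have hle : volume.restrict Ji ≤ mu01 := Measure.restrict_mono hsub le_rfl
  have hJfin : volume Ji < ⊤ := lt_of_le_of_lt (measure_mono hsub) (by simp)
  set ν : Measure ℝ := volume.restrict Ji with hν
  haveI : IsFiniteMeasure ν := ⟨by simpa [hν] using hJfin⟩
  set τ : Measure ℝ := volume.restrict (Set.Icc (0:ℝ) t) with hτ
  have hM' : ∀ s ∈ Set.Icc (0:ℝ) t, ∀ᵐ x ∂ν, |u x s| ≤ M := fun s hs => 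
    ae_mono hle (hM s hs)
  have hus1 : ∀ s, Measurable (fun x => u x s) := fun s => 
    hum.comp (measurable_id.prodMk measurable_const)
  have hui : Integrable (fun x => u x t) ν :=
    Integrable.of_bound (hus1 t).aestronglyMeasurable M (hM' t ⟨ht.le, le_rfl⟩)
  have hgi : Integrable g ν :=
    Integrable.of_bound hgm.aestronglyMeasurable Mg (ae_mono hle hgb)
  refine ⟨hui, ?_⟩
  have hFm : Measurable (fun q : (ℝ × ℝ) × ℝ => W q.1.2 q.2 * (u q.2 q.1.1 - u q.1.2 q.1.1)) := by
    have h1 : Measurable (fun q : (ℝ × ℝ) × ℝ => W q.1.2 q.2) :=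
      hWm.comp ((measurable_snd.comp measurable_fst).prodMk measurable_snd)
    have h2 : Measurable (fun q : (ℝ × ℝ) × ℝ => u q.2 q.1.1) :=
      hum.comp (measurable_snd.prodMk (measurable_fst.comp measurable_fst))
    have h3 : Measurable (fun q : (ℝ × ℝ) × ℝ => u q.1.2 q.1.1) :=
      hum.comp ((measurable_snd.comp measurable_fst).prodMk (measurable_fst.comp measurable_fst))
    exact h1.mul (h2.sub h3)
  set H : ℝ → ℝ → ℝ := fun s x => ∫ y, W x y * (u y s - u x s) ∂ν with hH
  have hHm : StronglyMeasurable (Function.uncurry H) :=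
    hFm.stronglyMeasurable.integral_prod_right' (ν := ν)
  have hpt : ∀ s x y, |u x s| ≤ M → |u y s| ≤ M → ‖W x y * (u y s - u x s)‖ ≤ 2 * M := by
    intro s x y h1 h2
    have hw : |W x y| ≤ 1 := abs_le.2 (hWI x y)
    rw [norm_mul, Real.norm_eq_abs, Real.norm_eq_abs]
    have h3 := abs_sub (u y s) (u x s)
    have h4 := abs_nonneg (u y s - u x s)
    nlinarith [abs_nonneg (W x y)]
  have hHb : ∀ᵐ p ∂(τ.prod ν), ‖Function.uncurry H p‖ ≤ 2 * M * ν.real univ := by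
    rw [Measure.ae_prod_iff_ae_ae (measurableSet_le hHm.measurable.norm measurable_const)]
    rw [hτ, ae_restrict_iff' measurableSet_Icc]
    refine Eventually.of_forall fun s hs => ?_
    filter_upwards [hM' s hs] with x hx
    refine norm_integral_le_of_norm_le_const ?_
    filter_upwards [hM' s hs] with y hy
    exact hpt s x y hx hy
  have hHi : Integrable (Function.uncurry H) (τ.prod ν) :=
    Integrable.of_bound hHm.aestronglyMeasurable _ hHb
  have hzero : ∀ s ∈ Set.Icc (0:ℝ) t, ∫ x, H s x ∂ν = 0 := by
    intro s hs
    have hKi : Integrable (Function.uncurry fun x y => W x y * (u y s - u x s)) (ν.prod ν) := by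
      have hKm : Measurable (Function.uncurry fun x y => W x y * (u y s - u x s)) :=
        hWm.mul (((hus1 s).comp measurable_snd).sub ((hus1 s).comp measurable_fst))
      refine Integrable.of_bound hKm.aestronglyMeasurable (2 * M) ?_
      rw [Measure.ae_prod_iff_ae_ae (measurableSet_le hKm.norm measurable_const)]
      filter_upwards [hM' s hs] with x hx
      filter_upwards [hM' s hs] with y hy
      exact hpt s x y hx hy
    have h1 := integral_integral_swap hKi
    have h2 : ∫ y, ∫ x, W x y * (u y s - u x s) ∂ν ∂ν = - ∫ x, H s x ∂ν := by
      rw [← integral_neg]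
      congr 1; ext y
      rw [hH, ← integral_neg]
      congr 1; ext x
      rw [hWs x y]; ring
    have h3 : ∫ x, H s x ∂ν = - ∫ x, H s x ∂ν := by
      rw [← h2, ← h1]
    linarith
  have hsw := integral_integral_swap hHi
  have h0 : ∫ s, ∫ x, H s x ∂ν ∂τ = 0 := by
    rw [hτ]
    rw [setIntegral_congr_fun measurableSet_Icc (fun s hs => hzero s hs)]
    simp
  have heq : ∀ᵐ x ∂ν, u x t = g x + ∫ s, H s x ∂τ := by
    have hb : ∀ᵐ x ∂ν, ∀ᵐ y : ℝ, y ∈ Set.Icc (0:ℝ) 1 \ Ji → W x y = 0 := by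
      rw [hν, ae_restrict_iff' hm]; exact hWb
    filter_upwards [ae_mono hle (hus t ht.le), hb] with x hx hbx
    rw [hx]
    congr 1
    refine integral_congr_ae (Eventually.of_forall fun s => ?_)
    refine setIntegral_eq_of_subset_of_ae_sdiff_eq_zero measurableSet_Icc.nullMeasurableSet hsub ?_
    filter_upwards [hbx] with y hy hy'
    rw [hy hy', zero_mul]
  have hHi2 : Integrable (fun x => ∫ s, H s x ∂τ) ν := hHi.integral_prod_right
  rw [integral_congr_ae heq, integral_add hgi hHi2, ← hsw, h0, add_zero]

/-- Necessary condition for consensus: the averages of `g` over the connected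
components must all coincide. -/
theorem consensus_necessary_condition {I : Type*} [Countable I]
    (J : I → Set ℝ)
    (hJint : ∀ i, (J i).OrdConnected)
    (hJdisj : Pairwise (Function.onFun Disjoint J))
    (hJcover : (⋃ i, J i) = Set.Icc (0:ℝ) 1)
    (hpos : ∀ i, 0 < volume (J i))
    (W : ℝ → ℝ → ℝ) (hW : IsKernel W)
    (hWblock : ∀ᵐ p : ℝ × ℝ ∂(volume : Measure (ℝ × ℝ)),
      ∀ i j, i ≠ j → p.1 ∈ J i → p.2 ∈ J j → W p.1 p.2 = 0)
    (hconn : ∀ i, ∀ S : Set ℝ, MeasurableSet S → S ⊆ J i →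
      0 < volume S → volume S < volume (J i) →
      0 < ∫ p in S ×ˢ (J i \ S), |W p.1 p.2|)
    (g : ℝ → ℝ) (hg : IsLinf g)
    (u : ℝ → ℝ → ℝ) (hu : IsSolution W g u)
    (hcons : ReachesConsensusOn u (Set.Icc (0:ℝ) 1)) :
    ∃ C : ℝ, ∀ i, (1 / (volume (J i)).toReal) * ∫ y in J i, g y = C := by
  have hm : ∀ i, MeasurableSet (J i) := fun i => (hJint i).measurableSet
  have hsub : ∀ i, J i ⊆ Set.Icc (0:ℝ) 1 := fun i => hJcover ▸ Set.subset_iUnion J i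
  have hb := Measure.ae_ae_of_ae_prod hWblock
  have hWb : ∀ i, ∀ᵐ x : ℝ, x ∈ J i → ∀ᵐ y : ℝ, y ∈ Set.Icc (0:ℝ) 1 \ J i → W x y = 0 := by
    intro i
    filter_upwards [hb] with x hx hxi
    filter_upwards [hx] with y hy hyi
    have hyc : y ∈ ⋃ j, J j := hJcover ▸ hyi.1
    obtain ⟨j, hj⟩ := Set.mem_iUnion.1 hyc
    refine hy i j ?_ hxi hj
    rintro rfl
    exact hyi.2 hj
  have key : ∀ ε > (0:ℝ), ∃ c : ℝ, ∀ i,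
      |(1 / (volume (J i)).toReal) * (∫ y in J i, g y) - c| ≤ ε := by
    intro ε hε
    obtain ⟨T, hT⟩ := hcons ε hε
    have ht : 0 < max T 1 := lt_of_lt_of_le one_pos (le_max_right _ _)
    have h1 := Measure.ae_ae_of_ae_prod (hT (max T 1) (le_max_left _ _))
    haveI : NeZero (volume.restrict (Set.Icc (0:ℝ) 1)) := ⟨by simp⟩
    obtain ⟨x, hx⟩ := h1.exists
    refine ⟨u x (max T 1), fun i => ?_⟩
    obtain ⟨hi, he⟩ := solution_conserved (J i) (hm i) (hsub i) W hW (hWb i) g hg u hu _ ht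
    have hfin : volume (J i) ≠ ⊤ :=
      (lt_of_le_of_lt (measure_mono (hsub i)) (by simp)).ne
    have hv : 0 < (volume (J i)).toReal := ENNReal.toReal_pos (hpos i).ne' hfin
    have h2 : ‖∫ y in J i, (u y (max T 1) - u x (max T 1))‖ ≤ ε * volume.real (J i) := by
      refine norm_setIntegral_le_of_norm_le_const_ae' hfin.lt_top ?_
      rw [← ae_restrict_iff' (hm i)]
      filter_upwards [ae_mono (Measure.restrict_mono (hsub i) le_rfl) hx] with y hy
      rw [Real.norm_eq_abs, abs_sub_comm]; exact hy
    rw [integral_sub hi (integrableOn_const hfin), setIntegral_const, he, smul_eq_mul,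
      Real.norm_eq_abs] at h2
    simp only [Measure.real] at h2
    have h3 : (1 / (volume (J i)).toReal) * (∫ y in J i, g y) - u x (max T 1)
        = ((∫ y in J i, g y) - (volume (J i)).toReal * u x (max T 1)) / (volume (J i)).toReal := by
      field_simp
    rw [h3, abs_div, abs_of_pos hv, div_le_iff₀ hv]
    exact h2
  rcases isEmpty_or_nonempty I with hI | ⟨⟨i0⟩⟩
  · exact ⟨0, fun i => (hI.false i).elim⟩
  · refine ⟨(1 / (volume (J i0)).toReal) * ∫ y in J i0, g y, fun i => ?_⟩
    · refine eq_of_abs_sub_le_all fun ε hε => ?_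
      obtain ⟨c, hc⟩ := key (ε / 2) (half_pos hε)
      have h1 := abs_le.1 (hc i)
      have h2 := abs_le.1 (hc i0)
      rw [abs_le]
      constructor <;> linarith [h1.1, h1.2, h2.1, h2.2]
end
end

section
/- Let W be a kernel and let A and B be maximal twin-sets of W. If A ∩ B ≠ ∅, then A and B agree up to a Lebesgue-null set, i.e. λ(A Δ B) = 0. Equivalently, two maximal twin-sets that do not agree up to a null set are disjoint. -/
open MeasureTheory Filter Set

noncomputable section

/-- Two maximal twin-sets that intersect agree up to a null set. -/
theorem maximal_twin_sets_disjoint (W : ℝ → ℝ → ℝ) (hW : IsKernel W)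
    (A B : Set ℝ) (hA : IsMaximalTwinSet W A) (hB : IsMaximalTwinSet W B)
    (hAB : (A ∩ B).Nonempty) :
    volume (symmDiff A B) = 0 := by
  obtain ⟨z, hzA, hzB⟩ := hAB
  obtain ⟨⟨mA, sA, pA, a, ha⟩, maxA⟩ := hA
  obtain ⟨⟨mB, sB, pB, b, hb⟩, maxB⟩ := hB
  have h1 : ∀ x ∈ A ∪ B, ∃ c : ℝ, ∀ᵐ y ∂mu01, W x y = c * W z y := by
    rintro x (hx | hx)
    · exact ⟨_, ha x hx z hzA⟩
    · exact ⟨_, hb x hx z hzB⟩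
  have h2 : ∀ x ∈ A ∪ B, ∃ c : ℝ, ∀ᵐ y ∂mu01, W z y = c * W x y := by
    rintro x (hx | hx)
    · exact ⟨_, ha z hzA x hx⟩
    · exact ⟨_, hb z hzB x hx⟩
  choose! c hc using h1
  choose! d hd using h2
  have hU : IsTwinSet W (A ∪ B) := by
    refine ⟨mA.union mB, union_subset sA sB,
      lt_of_lt_of_le pA (measure_mono subset_union_left),
      fun x x' => c x * d x', fun x hx x' hx' => ?_⟩
    filter_upwards [hc x hx, hd x' hx'] with y e1 e2
    rw [e1, e2, mul_assoc]
  have eA := maxA _ hU subset_union_left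
  have eB := maxB _ hU subset_union_right
  refine measure_mono_null ?_ (measure_union_null eA eB)
  rintro x (⟨hx, hn⟩ | ⟨hx, hn⟩)
  · exact Or.inr (Or.inl ⟨Or.inl hx, hn⟩)
  · exact Or.inl (Or.inl ⟨Or.inr hx, hn⟩)

end
end

section
/- Let W be a kernel with a twin-set A, witnessed by a function a : A × A → ℝ, and let d_W(x) = ∫₀¹ W(x,y) dy be the normalised degree function of W. Then either d_W(x) = 0 for all x ∈ A, or d_W(x) ≠ 0 for all x ∈ A; and in the latter case a(x,x') = d_W(x)/d_W(x') for all x, x' ∈ A. -/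
open MeasureTheory Filter Set

noncomputable section

/-- Degree dichotomy on a twin-set: the normalised degree vanishes on all of `A` or
on none of it, and in the latter case the twin function is a ratio of degrees. -/
theorem twin_set_degree_dichotomy (W : ℝ → ℝ → ℝ) (hW : IsKernel W)
    (A : Set ℝ) (hAmeas : MeasurableSet A) (hAsub : A ⊆ Set.Icc (0:ℝ) 1)
    (hApos : 0 < volume A)
    (a : ℝ → ℝ → ℝ)
    (ha : ∀ x ∈ A, ∀ x' ∈ A, ∀ᵐ y ∂mu01, W x y = a x x' * W x' y) :
    (∀ x ∈ A, degW W x = 0) ∨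
    ((∀ x ∈ A, degW W x ≠ 0) ∧
      ∀ x ∈ A, ∀ x' ∈ A, a x x' = degW W x / degW W x') := by
  have key : ∀ x ∈ A, ∀ x' ∈ A, degW W x = a x x' * degW W x' := by
    intro x hx x' hx'
    unfold degW
    rw [← integral_const_mul]
    exact integral_congr_ae (ha x hx x' hx')
  by_cases h : ∃ x' ∈ A, degW W x' = 0
  · obtain ⟨x', hx', h0⟩ := h
    left
    intro x hx
    rw [key x hx x' hx', h0, mul_zero]
  · right
    have hne : ∀ x ∈ A, degW W x ≠ 0 := fun x hx h0 => h ⟨x, hx, h0⟩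
    refine ⟨hne, fun x hx x' hx' => ?_⟩
    rw [eq_div_iff (hne x' hx'), key x hx x' hx']

end
end

section
/- Fix 0 < r < 1/2 and define the kernel W_r(x,y) = −1 if x < r and y < r, and W_r(x,y) = 1 otherwise. Let g ∈ L∞([0,1]) satisfy ∫₀ʳ g(y) dy = 0 and ∫ᵣ¹ g(y) dy = 0. Then the function u defined by u(x,t) = g(x) e^{−(1−2r)t} for x < r and u(x,t) = g(x) e^{−t} for x ≥ r is the solution of the continuum voting model IVP for (W_r, g), and u reaches consensus on [0,1] with lim_{t→∞} u(x,t) = 0 for every x ∈ [0,1]. -/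
open MeasureTheory Filter Set

noncomputable section

/-- For the kernel `W_r` (equal to `−1` on `[0,r)²` and `1` elsewhere) and an initial
condition with zero mean on `[0,r]` and on `[r,1]`, the explicit exponential function
solves the IVP and reaches consensus, with pointwise limit `0` on `[0,1]`. -/
theorem bipartite_kernel_consensus (r : ℝ) (hr0 : 0 < r) (hr : r < 1 / 2)
    (g : ℝ → ℝ) (hg : IsLinf g)
    (hg1 : ∫ y in Set.Icc (0:ℝ) r, g y = 0)
    (hg2 : ∫ y in Set.Icc r 1, g y = 0) :
    IsSolution (fun x y => if x < r ∧ y < r then (-1:ℝ) else 1) g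
      (fun x t => if x < r then g x * Real.exp (-(1 - 2 * r) * t)
        else g x * Real.exp (-t)) ∧
    ReachesConsensusOn
      (fun x t => if x < r then g x * Real.exp (-(1 - 2 * r) * t)
        else g x * Real.exp (-t)) (Set.Icc (0:ℝ) 1) ∧
    ∀ x ∈ Set.Icc (0:ℝ) 1,
      Filter.Tendsto
        (fun t => if x < r then g x * Real.exp (-(1 - 2 * r) * t)
          else g x * Real.exp (-t)) Filter.atTop (nhds 0) := by
  obtain ⟨hgm, M, hM⟩ := hg
  have hM' : ∀ᵐ x ∂(volume.restrict (Set.Icc (0:ℝ) 1)), |g x| ≤ M := hM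
  have hgi : IntegrableOn g (Set.Icc (0:ℝ) 1) volume := by
    refine Measure.integrableOn_of_bounded (M := M) (by simp) hgm.aestronglyMeasurable ?_
    simpa [Real.norm_eq_abs] using hM'
  have hsub1 : Set.Ico (0:ℝ) r ⊆ Set.Icc 0 1 := fun x hx => ⟨hx.1, by linarith [hx.2]⟩
  have hsub2 : Set.Icc r (1:ℝ) ⊆ Set.Icc 0 1 := fun x hx => ⟨by linarith [hx.1], hx.2⟩
  have hunion : Set.Icc (0:ℝ) 1 = Set.Ico 0 r ∪ Set.Icc r 1 :=
    (Set.Ico_union_Icc_eq_Icc hr0.le (by linarith)).symm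
  have hdisj : Disjoint (Set.Ico (0:ℝ) r) (Set.Icc r 1) := by
    rw [Set.disjoint_left]; intro x hx hx'; exact absurd hx.2 (not_lt.mpr hx'.1)
  have hg1' : ∫ y in Set.Ico (0:ℝ) r, g y = 0 := by rw [← integral_Icc_eq_integral_Ico]; exact hg1
  have key : ∀ (F : ℝ → ℝ) (a b c d : ℝ), (∀ y ∈ Set.Ico (0:ℝ) r, F y = a * g y + b) →
      (∀ y ∈ Set.Icc r (1:ℝ), F y = c * g y + d) →
      ∫ y in Set.Icc (0:ℝ) 1, F y = r * b + (1 - r) * d := by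
    intro F a b c d h1 h2
    have i1 : IntegrableOn (fun y => a * g y) (Set.Ico (0:ℝ) r) volume :=
      (hgi.mono_set hsub1).const_mul a
    have i2 : IntegrableOn (fun y => c * g y) (Set.Icc r (1:ℝ)) volume :=
      (hgi.mono_set hsub2).const_mul c
    have c1 : IntegrableOn (fun _ : ℝ => b) (Set.Ico (0:ℝ) r) volume :=
      integrableOn_const (by simp)
    have c2 : IntegrableOn (fun _ : ℝ => d) (Set.Icc r (1:ℝ)) volume :=
      integrableOn_const (by simp)
    have f1 : IntegrableOn F (Set.Ico (0:ℝ) r) volume :=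
      (i1.add c1).congr_fun (fun y hy => (h1 y hy).symm) measurableSet_Ico
    have f2 : IntegrableOn F (Set.Icc r (1:ℝ)) volume :=
      (i2.add c2).congr_fun (fun y hy => (h2 y hy).symm) measurableSet_Icc
    rw [hunion, setIntegral_union hdisj measurableSet_Icc f1 f2,
      setIntegral_congr_fun measurableSet_Ico h1, setIntegral_congr_fun measurableSet_Icc h2,
      integral_add i1 c1, integral_add i2 c2, integral_const_mul, integral_const_mul, hg1', hg2]
    have e : 0 ≤ 1 - r := by linarith
    simp [Measure.real, hr0.le, e]
  have expint : ∀ (k t : ℝ), 0 ≤ t → ∀ c : ℝ,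
      ∫ s in Set.Icc (0:ℝ) t, -k * (c * Real.exp (-k * s)) = c * Real.exp (-k * t) - c := by
    intro k t ht c
    rw [integral_Icc_eq_integral_Ioc, ← intervalIntegral.integral_of_le ht,
      intervalIntegral.integral_eq_sub_of_hasDerivAt (f := fun s => c * Real.exp (-k * s))]
    · simp
    · intro s _
      have := (((hasDerivAt_id s).const_mul (-k)).exp).const_mul c
      refine this.congr_deriv ?_
      simp only [id]; ring
    · apply Continuous.intervalIntegrable; fun_prop
  have lim1 : Tendsto (fun t : ℝ => Real.exp (-(1 - 2 * r) * t)) atTop (nhds 0) := by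
    apply Real.tendsto_exp_atBot.comp
    exact tendsto_id.const_mul_atTop_of_neg (by linarith)
  have lim2 : Tendsto (fun t : ℝ => Real.exp (-t)) atTop (nhds 0) :=
    Real.tendsto_exp_atBot.comp tendsto_neg_atTop_atBot
  have ubd : ∀ t ≥ (0:ℝ), ∀ x, |g x| ≤ M → |(if x < r then g x * Real.exp (-(1 - 2 * r) * t)
        else g x * Real.exp (-t))| ≤ M * Real.exp (-(1 - 2 * r) * t) := by
    intro t ht x hx
    have h0 : Real.exp (-t) ≤ Real.exp (-(1 - 2 * r) * t) := by
      apply Real.exp_le_exp.mpr; nlinarith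
    split_ifs
    · rw [abs_mul, abs_of_pos (Real.exp_pos _)]
      exact mul_le_mul_of_nonneg_right hx (Real.exp_pos _).le
    · rw [abs_mul, abs_of_pos (Real.exp_pos _)]
      exact mul_le_mul hx h0 (Real.exp_pos _).le ((abs_nonneg _).trans hx)
  refine ⟨⟨?_, ?_, ?_⟩, ?_, ?_⟩
  · refine Measurable.ite (measurableSet_lt measurable_fst measurable_const) ?_ ?_
    · exact (hgm.comp measurable_fst).mul
        (Real.measurable_exp.comp (measurable_snd.const_mul _))
    · exact (hgm.comp measurable_fst).mul (Real.measurable_exp.comp measurable_snd.neg)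
  · intro T hT
    refine ⟨M, fun t ht => ?_⟩
    filter_upwards [hM] with x hx
    refine (ubd t ht.1 x hx).trans ?_
    have : Real.exp (-(1 - 2 * r) * t) ≤ 1 := Real.exp_le_one_iff.mpr (by nlinarith [ht.1])
    exact mul_le_of_le_one_right ((abs_nonneg _).trans hx) this
  · intro t ht
    refine Eventually.of_forall fun x => ?_
    by_cases hx : x < r
    · have hin : ∀ s : ℝ, (∫ y in Set.Icc (0:ℝ) 1, (if x < r ∧ y < r then (-1:ℝ) else 1) *
          ((if y < r then g y * Real.exp (-(1 - 2 * r) * s) else g y * Real.exp (-s)) -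
          (if x < r then g x * Real.exp (-(1 - 2 * r) * s) else g x * Real.exp (-s)))) =
          -(1 - 2 * r) * (g x * Real.exp (-(1 - 2 * r) * s)) := by
        intro s
        rw [key _ (-Real.exp (-(1 - 2 * r) * s)) (g x * Real.exp (-(1 - 2 * r) * s))
          (Real.exp (-s)) (-(g x * Real.exp (-(1 - 2 * r) * s)))]
        · ring
        · intro y hy
          simp only [hx, hy.2, and_self, if_true]; ring
        · intro y hy
          simp only [hx, not_lt.mpr hy.1, and_false, if_true, if_false]; ring
      simp only [hin]
      rw [expint _ t ht, if_pos hx]; ring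
    · have hin : ∀ s : ℝ, (∫ y in Set.Icc (0:ℝ) 1, (if x < r ∧ y < r then (-1:ℝ) else 1) *
          ((if y < r then g y * Real.exp (-(1 - 2 * r) * s) else g y * Real.exp (-s)) -
          (if x < r then g x * Real.exp (-(1 - 2 * r) * s) else g x * Real.exp (-s)))) =
          -1 * (g x * Real.exp (-1 * s)) := by
        intro s
        rw [key _ (Real.exp (-(1 - 2 * r) * s)) (-(g x * Real.exp (-s)))
          (Real.exp (-s)) (-(g x * Real.exp (-s)))]
        · rw [neg_one_mul s]; ring
        · intro y hy
          simp only [hx, hy.2, false_and, if_true, if_false]; ring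
        · intro y hy
          simp only [hx, not_lt.mpr hy.1, and_false, if_false]; ring
      simp only [hin]
      rw [expint _ t ht, if_neg hx, neg_one_mul t]; ring
  · intro ε hε
    have hl : Tendsto (fun t : ℝ => 2 * (M * Real.exp (-(1 - 2 * r) * t))) atTop (nhds 0) := by
      simpa using (lim1.const_mul M).const_mul 2
    obtain ⟨T, hT⟩ := eventually_atTop.mp (hl.eventually (eventually_lt_nhds hε))
    refine ⟨max T 0, fun t ht => ?_⟩
    have a1 := Measure.quasiMeasurePreserving_fst
      (μ := volume.restrict (Set.Icc (0:ℝ) 1)) (ν := volume.restrict (Set.Icc (0:ℝ) 1)) |>.ae hM'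
    have a2 := Measure.quasiMeasurePreserving_snd
      (μ := volume.restrict (Set.Icc (0:ℝ) 1)) (ν := volume.restrict (Set.Icc (0:ℝ) 1)) |>.ae hM'
    filter_upwards [a1, a2] with p h1 h2
    have ht0 : 0 ≤ t := (le_max_right _ _).trans ht
    have b1 := ubd t ht0 p.1 h1
    have b2 := ubd t ht0 p.2 h2
    have b3 := hT t ((le_max_left _ _).trans ht)
    refine (abs_sub _ _).trans ?_
    linarith
  · intro x _
    by_cases hx : x < r
    · simpa [hx] using lim1.const_mul (g x)
    · simpa [hx] using lim2.const_mul (g x)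

end
end
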